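/- Let X be a standard Borel space, E a countable Borel equivalence relation on X, ρ : E → (0,∞) a Borel cocycle, f, g : X → [0,∞) Borel functions, and r > 1. Then there exist an E-invariant Borel set B ⊆ X, a Borel set C ⊆ B, and a finite Borel subequivalence relation F of E restricted to B such that ρ restricted to E restricted to the complement of B is smooth and ∫_C f dμ^ρ_{[x]_F} ≤ ∫_{B∖C} g dμ^ρ_{[x]_F} ≤ r·∫_C f dμ^ρ_{[x]_F} for all x ∈ B. -/

import Mathlib

open MeasureTheory Set ENNReal

namespace CocycleNadkarni

variable {X : Type*} {Γ : Type*}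

/-- The `ρ`-size of `Y` relative to the point `z`: `∑_{y ∈ Y} ρ(y, z)`. -/
noncomputable def eSize (ρ : X → X → ℝ) (Y : Set X) (z : X) : ℝ≥0∞ :=
  ∑' y : Y, ENNReal.ofReal (ρ y z)

/-- The `ρ`-size of `Y` relative to the set `Z`, computed at the point `z`. -/
noncomputable def relSize (ρ : X → X → ℝ) (Y Z : Set X) (z : X) : ℝ≥0∞ :=
  eSize ρ Y z / eSize ρ Z z

/-- Real-valued `ρ`-size (used for finite sets). -/
noncomputable def rSize (ρ : X → X → ℝ) (Y : Set X) (z : X) : ℝ :=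
  ∑' y : Y, ρ y z

/-- `∫_C f dμ^ρ_S`, computed at the point `z`. -/
noncomputable def avgOn (ρ : X → X → ℝ) (f : X → ℝ) (S C : Set X) (z : X) : ℝ :=
  (∑' y : ↥(S ∩ C), f y * ρ y z) / rSize ρ S z

/-- countable Borel equivalence relation -/
def IsCBER [MeasurableSpace X] (E : X → X → Prop) : Prop :=
  Equivalence E ∧ MeasurableSet {p : X × X | E p.1 p.2} ∧ ∀ x : X, {y | E x y}.Countable

/-- Borel cocycle `ρ : E → (0, ∞)` (as a total function whose values off `E` are irrelevant). -/
def IsCocycle [MeasurableSpace X] (E : X → X → Prop) (ρ : X → X → ℝ) : Prop :=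
  Measurable (fun p : X × X => ρ p.1 p.2) ∧
    (∀ ⦃x y : X⦄, E x y → 0 < ρ x y) ∧
    ∀ ⦃x y z : X⦄, E x y → E y z → ρ x z = ρ x y * ρ y z

/-- Borel cocycle into a group `Γ`. -/
def IsGrpCocycle [MeasurableSpace X] [Group Γ] [MeasurableSpace Γ]
    (E : X → X → Prop) (ρ : X → X → Γ) : Prop :=
  Measurable (fun p : X × X => ρ p.1 p.2) ∧
    ∀ ⦃x y z : X⦄, E x y → E y z → ρ x z = ρ x y * ρ y z

/-- finite Borel subequivalence relation of `E` -/
def IsFinSubequiv [MeasurableSpace X] (E F : X → X → Prop) : Prop :=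
  Equivalence F ∧ MeasurableSet {p : X × X | F p.1 p.2} ∧
    (∀ ⦃x y : X⦄, F x y → E x y) ∧ ∀ x : X, {y | F x y}.Finite

/-- finite Borel subequivalence relation of `E` restricted to `W` (extended by the diagonal). -/
def IsFinSubequivOn [MeasurableSpace X] (E : X → X → Prop) (W : Set X)
    (F : X → X → Prop) : Prop :=
  Equivalence F ∧ MeasurableSet {p : X × X | F p.1 p.2} ∧
    (∀ ⦃x y : X⦄, F x y → x = y ∨ (E x y ∧ x ∈ W ∧ y ∈ W)) ∧ ∀ x : X, {y | F x y}.Finite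

/-- `ρ`-invariance of a Borel measure. -/
def IsInvariant [MeasurableSpace X] (E : X → X → Prop) (ρ : X → X → ℝ)
    (μ : Measure X) : Prop :=
  ∀ T : X ≃ᵐ X, (∀ x, E (T x) x) → ∀ B : Set X, MeasurableSet B →
    μ (T '' B) = ∫⁻ x in B, ENNReal.ofReal (ρ (T x) x) ∂μ

/-- invariance w.r.t. the restriction of `ρ` to a set `R` of pairs, via Borel injections
whose graphs are contained in `R⁻¹`. -/
def IsInvariantRel [MeasurableSpace X] (R : Set (X × X)) (ρ : X → X → ℝ)
    (μ : Measure X) : Prop :=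
  ∀ (B : Set X) (T : X → X), MeasurableSet B → Measurable T → Set.InjOn T B →
    (∀ x ∈ B, ((T x, x) : X × X) ∈ R) →
    μ (T '' B) = ∫⁻ x in B, ENNReal.ofReal (ρ (T x) x) ∂μ

/-- a Borel ℕ-coloring of the lacunarity digraph `G^ρ_Z`. -/
def HasColoring [MeasurableSpace X] (E : X → X → Prop) (ρ : X → X → Γ)
    (Z : Set Γ) : Prop :=
  ∃ c : X → ℕ, Measurable c ∧
    ∀ ⦃x y : X⦄, x ≠ y → E x y → ρ x y ∈ Z → c x ≠ c y

/-- smoothness of the cocycle `ρ` restricted to `E` restricted to `W`. -/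
def SmoothOn [MeasurableSpace X] (E : X → X → Prop) (ρ : X → X → ℝ)
    (W : Set X) : Prop :=
  ∃ U : Set ℝ, IsOpen U ∧ (1:ℝ) ∈ U ∧ U ⊆ Set.Ioi 0 ∧
    ∃ c : X → ℕ, Measurable c ∧
      ∀ ⦃x y : X⦄, x ∈ W → y ∈ W → x ≠ y → E x y → ρ x y ∈ U → c x ≠ c y

/-- smoothness of the cocycle `ρ` on `E`. -/
def Smooth [MeasurableSpace X] (E : X → X → Prop) (ρ : X → X → ℝ) : Prop :=
  SmoothOn E ρ Set.univ

/-- `E`-invariance of a set. -/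
def EInvariant (E : X → X → Prop) (B : Set X) : Prop :=
  ∀ ⦃x y : X⦄, E x y → x ∈ B → y ∈ B

/-- a compression of `ρ` over the finite subequivalence relation `F` of `E`. -/
def CompressionOver [MeasurableSpace X] (E F : X → X → Prop) (ρ : X → X → ℝ)
    (φ : X → X) : Prop :=
  (∀ x, E x (φ x)) ∧
  (∀ x : X, relSize ρ (φ ⁻¹' {y | F y x}) {y | F y x} x ≤ 1) ∧
  (∀ x : X, ∃ y, E x y ∧ relSize ρ (φ ⁻¹' {z | F z y}) {z | F z y} y < 1)

/-- a compression of the quotient of `ρ | E | W` by the finite subequivalence relation given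
by the setoid `s`, expressed via representatives. -/
def QuotCompressionOn [MeasurableSpace X] (E : X → X → Prop) (ρ : X → X → ℝ)
    (W : Set X) (s : Setoid X) (φ : Quotient s → Quotient s) : Prop :=
  (∀ ⦃x : X⦄, x ∈ W → ∀ y : X, φ (Quotient.mk s x) = Quotient.mk s y → (E x y ∧ y ∈ W)) ∧
  (∀ ⦃x : X⦄, x ∈ W →
    relSize ρ {y | y ∈ W ∧ φ (Quotient.mk s y) = Quotient.mk s x} {y | s.r y x} x ≤ 1) ∧
  (∀ ⦃x : X⦄, x ∈ W → ∃ y, y ∈ W ∧ E x y ∧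
    relSize ρ {z | z ∈ W ∧ φ (Quotient.mk s z) = Quotient.mk s y} {z | s.r z y} y < 1)


/-- `B` has `ρ`-density at least `ε` relative to `W`. -/
def HasDensityAtLeastOn [MeasurableSpace X] (E : X → X → Prop) (ρ : X → X → ℝ)
    (B W : Set X) (ε : ℝ) : Prop :=
  ∃ F : X → X → Prop, IsFinSubequivOn E W F ∧
    ∀ x ∈ W, ENNReal.ofReal ε ≤ relSize ρ (B ∩ {y | F y x}) {y | F y x} x

/-- `B` has positive `ρ`-density relative to `W`. -/
def HasPosDensityOn [MeasurableSpace X] (E : X → X → Prop) (ρ : X → X → ℝ)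
    (B W : Set X) : Prop :=
  ∃ ε : ℝ, 0 < ε ∧ HasDensityAtLeastOn E ρ B W ε

/-- `B` has σ-positive `ρ`-density relative to `W`. -/
def HasSigmaPosDensityOn [MeasurableSpace X] (E : X → X → Prop) (ρ : X → X → ℝ)
    (B W : Set X) : Prop :=
  ∃ A : ℕ → Set X, (∀ n, MeasurableSet (A n)) ∧ (∀ n, A n ⊆ W) ∧
    (∀ n, ∀ x ∈ A n, ∀ y ∈ W, E x y → y ∈ A n) ∧ W = ⋃ n, A n ∧
    ∀ n, HasPosDensityOn E ρ (B ∩ A n) (A n)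

section LN
variable {P Q : Type*}

def LNSmall [MeasurableSpace P] (π : P → Q) (W : Set P) : Prop :=
  ∃ Z : ℕ → Set P, (∀ n, MeasurableSet (Z n) ∧ InjOn π (Z n)) ∧ W ⊆ ⋃ n, Z n

lemma LNSmall.iUnion [MeasurableSpace P] {π : P → Q} {ι : Type*} [Countable ι] {W : ι → Set P}
    (h : ∀ i, LNSmall π (W i)) : LNSmall π (⋃ i, W i) := by
  choose Z hZ hW using h
  rcases isEmpty_or_nonempty ι with hι | hι
  · exact ⟨fun _ => ∅, fun n => ⟨MeasurableSet.empty, by simp⟩, by simp⟩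
  obtain ⟨u, hu⟩ := exists_surjective_nat (ι × ℕ)
  refine ⟨fun n => Z (u n).1 (u n).2, fun n => hZ _ _, ?_⟩
  intro p hp
  obtain ⟨i, hi⟩ := mem_iUnion.1 hp
  obtain ⟨n, hn⟩ := mem_iUnion.1 (hW i hi)
  obtain ⟨m, hm⟩ := hu (i, n)
  exact mem_iUnion.2 ⟨m, by simpa [hm] using hn⟩

lemma LNSmall.mono [MeasurableSpace P] {π : P → Q} {W W' : Set P} (h : LNSmall π W)
    (hs : W' ⊆ W) : LNSmall π W' := by
  obtain ⟨Z, hZ, hW⟩ := h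
  exact ⟨Z, hZ, hs.trans hW⟩

lemma LNSmall.union [MeasurableSpace P] {π : P → Q} {W W' : Set P} (h : LNSmall π W)
    (h' : LNSmall π W') : LNSmall π (W ∪ W') := by
  rw [union_eq_iUnion]
  apply LNSmall.iUnion
  rintro (_ | _) <;> simpa

lemma analytic_injOn_subset [TopologicalSpace P] [PolishSpace P] [MeasurableSpace P] [BorelSpace P]
    [TopologicalSpace Q] [T2Space Q] {π : P → Q} (hπ : Continuous π) {A : Set P}
    (hA : AnalyticSet A) (hinj : InjOn π A) :
    ∃ Z, MeasurableSet Z ∧ InjOn π Z ∧ A ⊆ Z := by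
  have hR : AnalyticSet {q : P × P | π q.1 = π q.2 ∧ q.1 ≠ q.2} := by
    apply MeasurableSet.analyticSet
    apply MeasurableSet.inter
    · exact (isClosed_eq (hπ.comp continuous_fst) (hπ.comp continuous_snd)).measurableSet
    · exact (isClosed_eq continuous_fst continuous_snd).measurableSet.compl
  have key : ∀ S : Set P, AnalyticSet S →
      AnalyticSet {p | ∃ q ∈ S, π q = π p ∧ q ≠ p} := by
    intro S hS
    have h1 : AnalyticSet ((Prod.fst ⁻¹' S) ∩ {q : P × P | π q.1 = π q.2 ∧ q.1 ≠ q.2}) := by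
      rw [inter_eq_iInter]
      apply AnalyticSet.iInter
      rintro (_ | _)
      · exact hR
      · exact hS.preimage continuous_fst
    convert h1.image_of_continuous continuous_snd using 1
    ext p
    constructor
    · rintro ⟨q, hq, h⟩
      exact ⟨(q, p), ⟨hq, h⟩, rfl⟩
    · rintro ⟨⟨q, p'⟩, ⟨hq, h⟩, rfl⟩
      exact ⟨q, hq, h⟩
  obtain ⟨B1, h1A, h1d, h1m⟩ := hA.measurablySeparable (key A hA) (by
    rw [Set.disjoint_left]
    rintro p hp ⟨q, hq, h, hne⟩
    exact hne (hinj hq hp h))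
  obtain ⟨B2, h2A, h2d, h2m⟩ := hA.measurablySeparable (key B1 h1m.analyticSet) (by
    rw [Set.disjoint_left]
    rintro p hp ⟨q, hq, h, hne⟩
    exact Set.disjoint_left.1 h1d ⟨p, hp, h.symm, hne.symm⟩ hq)
  refine ⟨B1 ∩ B2, h1m.inter h2m, ?_, subset_inter h1A h2A⟩
  intro p hp q hq h
  by_contra hne
  exact Set.disjoint_left.1 h2d ⟨p, hp.1, h, hne⟩ hq.2

def LNLarge [MeasurableSpace P] (π : P → Q) (k : ℕ) (N : ℕ → Set P) : Prop :=
  ∀ Z, LNSmall π Z → ∃ a : ℕ → P, (∀ i ≤ k, a i ∈ N i ∧ a i ∉ Z) ∧ ∀ i ≤ k, π (a i) = π (a 0)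

lemma LNLarge.pair [TopologicalSpace P] [PolishSpace P] [MeasurableSpace P] [BorelSpace P]
    [TopologicalSpace Q] [T2Space Q] {π : P → Q} (hπ : Continuous π) {k : ℕ} {N : ℕ → Set P}
    (hN : ∀ i ≤ k, IsOpen (N i)) (hL : LNLarge π k N) {s : ℕ} (hs : s ≤ k) (Z : Set P)
    (hZ : LNSmall π Z) :
    ∃ a : ℕ → P, ∃ b : P, (∀ i ≤ k, a i ∈ N i ∧ a i ∉ Z) ∧ (∀ i ≤ k, π (a i) = π (a 0)) ∧
      b ∈ N s ∧ b ∉ Z ∧ π b = π (a 0) ∧ a s ≠ b := by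
  by_contra hcon
  push Not at hcon
  obtain ⟨Zn, hZn, hZs⟩ := hZ
  set Z' := ⋃ n, Zn n with hZ'
  have hZ'm : MeasurableSet Z' := MeasurableSet.iUnion fun n => (hZn n).1
  have hZ'S : LNSmall π Z' := ⟨Zn, hZn, subset_rfl⟩
  let H : Set (ℕ → P) := {a | (∀ i ≤ k, a i ∈ N i ∧ a i ∉ Z') ∧ ∀ i ≤ k, π (a i) = π (a 0)}
  have hH : MeasurableSet H := by
    have : H = (⋂ i, ⋂ (_ : i ≤ k), {a | a i ∈ N i} ∩ {a | a i ∉ Z'}) ∩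
        ⋂ i, ⋂ (_ : i ≤ k), {a | π (a i) = π (a 0)} := by
      ext a; simp [H]
    rw [this]
    refine MeasurableSet.inter (MeasurableSet.iInter fun i => MeasurableSet.iInter fun hi => ?_)
      (MeasurableSet.iInter fun i => MeasurableSet.iInter fun hi => ?_)
    · exact (measurable_pi_apply i (hN i hi).measurableSet).inter
        ((measurable_pi_apply (X := fun _ : ℕ => P) i) hZ'm.compl)
    · exact (isClosed_eq (hπ.comp (continuous_apply i))
        (hπ.comp (continuous_apply 0))).measurableSet
  have hA : AnalyticSet ((fun a : ℕ → P => a s) '' H) :=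
    hH.analyticSet.image_of_continuous (continuous_apply s)
  obtain ⟨Z2, hZ2m, hZ2i, hZ2⟩ := analytic_injOn_subset hπ hA (by
    rintro _ ⟨a, ha, rfl⟩ _ ⟨b, hb, rfl⟩ h
    refine hcon a (b s) (fun i hi => ⟨(ha.1 i hi).1, fun h => (ha.1 i hi).2 (hZs h)⟩) ha.2
      (hb.1 s hs).1 (fun h => (hb.1 s hs).2 (hZs h)) ?_
    rw [← h]; exact ha.2 s hs)
  have hsm : LNSmall π (Z' ∪ Z2) := hZ'S.union
    ⟨fun _ => Z2, fun _ => ⟨hZ2m, hZ2i⟩, subset_iUnion_of_subset 0 subset_rfl⟩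
  obtain ⟨a, ha, ha'⟩ := hL _ hsm
  have haH : a ∈ H := ⟨fun i hi => ⟨(ha i hi).1, fun h => (ha i hi).2 (Or.inl h)⟩, ha'⟩
  exact (ha s hs).2 (Or.inr (hZ2 ⟨a, haH, rfl⟩))

lemma LNLarge.split [MetricSpace P] [SecondCountableTopology P] [CompleteSpace P]
    [MeasurableSpace P] [BorelSpace P]
    [TopologicalSpace Q] [T2Space Q] {π : P → Q} (hπ : Continuous π) {k : ℕ} {N : ℕ → Set P}
    (hN : ∀ i ≤ k, IsOpen (N i)) (hL : LNLarge π k N) {s : ℕ} (hs : s ≤ k)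
    {ε : ℝ} (hε : 0 < ε) :
    ∃ N' : ℕ → Set P, (∀ i ≤ k + 1, IsOpen (N' i)) ∧ LNLarge π (k + 1) N' ∧
      (∀ i ≤ k, closure (N' i) ⊆ N i) ∧ closure (N' (k + 1)) ⊆ N s ∧
      Disjoint (closure (N' s)) (closure (N' (k + 1))) ∧
      (∀ i ≤ k + 1, ∀ u ∈ N' i, ∀ v ∈ N' i, dist u v < ε) := by
  by_contra hcon
  push Not at hcon
  let B := TopologicalSpace.countableBasis P
  let T := Fin (k + 2) → B
  let nb : T → ℕ → Set P := fun t i => if h : i < k + 2 then (t ⟨i, h⟩ : Set P) else ∅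
  have hopen : ∀ t : T, ∀ i ≤ k + 1, IsOpen (nb t i) := by
    intro t i hi
    have : i < k + 2 := by omega
    simp only [nb, this, dite_true]
    exact TopologicalSpace.isOpen_of_mem_countableBasis (t _).2
  have hex : ∀ t : T, ∃ Z, LNSmall π Z ∧ (¬ LNLarge π (k+1) (nb t) → ¬ ∃ a : ℕ → P, (∀ i ≤ k + 1, a i ∈ nb t i ∧ a i ∉ Z) ∧
      ∀ i ≤ k + 1, π (a i) = π (a 0)) := by
    intro t
    by_cases h : LNLarge π (k+1) (nb t)
    · exact ⟨∅, ⟨fun _ => ∅, fun n => ⟨MeasurableSet.empty, by simp⟩, by simp⟩, fun h' => absurd h h'⟩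
    · have h2 := h
      unfold LNLarge at h2
      push Not at h2
      obtain ⟨Z, hZ, h3⟩ := h2
      refine ⟨Z, hZ, fun _ => ?_⟩
      rintro ⟨a, ha, ha'⟩
      obtain ⟨i, hi, h4⟩ := h3 a ha
      exact h4 (ha' i hi)
  choose Z hZ hZ' using hex
  have : Countable B := (TopologicalSpace.countable_countableBasis P).to_subtype
  obtain ⟨a, b, ha, haπ, hbN, hbZ, hbπ, hab⟩ := hL.pair hπ hN hs (⋃ t, Z t) (LNSmall.iUnion hZ)
  let c : ℕ → P := fun i => if i ≤ k then a i else b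
  have hck : ∀ i ≤ k, c i = a i := fun i hi => by simp [c, hi]
  have hck1 : c (k + 1) = b := by simp [c]
  have hcπ : ∀ i ≤ k + 1, π (c i) = π (c 0) := by
    intro i hi
    rw [hck 0 (Nat.zero_le _)]
    rcases Nat.le_succ_iff.1 hi with h | h
    · rw [hck i h]; exact haπ i h
    · subst h; rw [hck1]; exact hbπ
  have hcZ : ∀ i ≤ k + 1, c i ∉ ⋃ t, Z t := by
    intro i hi
    rcases Nat.le_succ_iff.1 hi with h | h
    · rw [hck i h]; exact (ha i h).2
    · subst h; rw [hck1]; exact hbZ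
  let M : ℕ → Set P := fun i => if i ≤ k then N i else N s
  have hMo : ∀ i, i ≤ k + 1 → IsOpen (M i) := by
    intro i hi
    by_cases h : i ≤ k
    · simpa [M, h] using hN i h
    · simpa [M, h] using hN s hs
  have hcM : ∀ i ≤ k + 1, c i ∈ M i := by
    intro i hi
    by_cases h : i ≤ k
    · simpa [M, c, h] using (ha i h).1
    · simpa [M, c, h] using hbN
  have hd : 0 < dist (a s) b := dist_pos.2 hab
  have hV : ∀ i : Fin (k + 2), ∃ V : B, c i ∈ (V : Set P) ∧ ∃ δ, δ < ε / 2 ∧ δ < dist (a s) b / 2 ∧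
      (V : Set P) ⊆ Metric.closedBall (c i) δ ∧ Metric.closedBall (c i) δ ⊆ M i := by
    intro i
    have hi : (i : ℕ) ≤ k + 1 := by have := i.2; omega
    obtain ⟨δ, hδ, hδM⟩ := Metric.isOpen_iff.1 (hMo i hi) (c i) (hcM i hi)
    let δ' := min (δ / 2) (min (ε / 4) (dist (a s) b / 4))
    have hδ' : 0 < δ' := by positivity
    obtain ⟨V, hVB, hcV, hVs⟩ := (TopologicalSpace.isBasis_countableBasis P).exists_subset_of_mem_open
      (Metric.mem_ball_self hδ' : c i ∈ Metric.ball (c i) δ') Metric.isOpen_ball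
    have e1 : δ' ≤ δ / 2 := min_le_left _ _
    have e2 : δ' ≤ ε / 4 := (min_le_right _ _).trans (min_le_left _ _)
    have e3 : δ' ≤ dist (a s) b / 4 := (min_le_right _ _).trans (min_le_right _ _)
    refine ⟨⟨V, hVB⟩, hcV, δ', by linarith, by linarith, hVs.trans Metric.ball_subset_closedBall, ?_⟩
    exact (Metric.closedBall_subset_ball (by linarith)).trans hδM
  choose t hct δ hδε hδd htδ hδM using hV
  have hnb : ∀ i (hi : i < k + 2), nb t i = (t ⟨i, hi⟩ : Set P) := fun i hi => by simp [nb, hi]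
  have hcl : ∀ i (hi : i < k + 2), closure (nb t i) ⊆ Metric.closedBall (c i) (δ ⟨i, hi⟩) := by
    intro i hi
    rw [hnb i hi]
    exact closure_minimal (htδ ⟨i, hi⟩) Metric.isClosed_closedBall
  by_cases hLt : LNLarge π (k + 1) (nb t)
  · obtain ⟨i, hi, u, hu, v, hv, huv⟩ := hcon (nb t) (hopen t) hLt (by
      intro i hi
      have hi' : i < k + 2 := by omega
      have := (hcl i hi').trans (hδM ⟨i, hi'⟩)
      simpa [M, hi] using this) (by
      have := (hcl (k+1) (by omega)).trans (hδM ⟨k+1, by omega⟩)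
      simpa [M] using this) (by
      rw [Set.disjoint_left]
      intro p hp hq
      have h1 := hcl s (by omega) hp
      have h2 := hcl (k+1) (by omega) hq
      have h3 := hδd ⟨s, by omega⟩
      have h4 := hδd ⟨k+1, by omega⟩
      rw [Metric.mem_closedBall] at h1 h2
      rw [hck s hs] at h1
      rw [hck1] at h2
      have := dist_triangle_left (a s) b p
      linarith)
    have hi' : i < k + 2 := by omega
    have h1 := hcl i hi' (subset_closure hu)
    have h2 := hcl i hi' (subset_closure hv)
    have h3 := hδε ⟨i, hi'⟩
    rw [Metric.mem_closedBall] at h1 h2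
    have := dist_triangle_right u v (c i)
    linarith
  · refine hZ' t hLt ⟨c, fun i hi => ⟨?_, fun h => hcZ i hi (mem_iUnion.2 ⟨t, h⟩)⟩, hcπ⟩
    have hi' : i < k + 2 := by omega
    rw [hnb i hi']
    exact hct ⟨i, hi'⟩

theorem ln_cover_metric [MetricSpace P] [SecondCountableTopology P] [CompleteSpace P]
    [MeasurableSpace P] [BorelSpace P]
    [TopologicalSpace Q] [T2Space Q] {π : P → Q} (hπ : Continuous π)
    (hc : ∀ x, {p | π p = x}.Countable) : LNSmall π univ := by
  by_contra hns
  let s : ℕ → ℕ := fun m => (Nat.unpair m).1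
  have hs : ∀ m, s m ≤ m := Nat.unpair_left_le
  have hs' : ∀ i n, ∃ m, n ≤ m ∧ s m = i := fun i n =>
    ⟨Nat.pair i n, Nat.right_le_pair i n, by simp [s]⟩
  let St : ℕ → Type _ := fun k => {N : ℕ → Set P // (∀ i ≤ k, IsOpen (N i)) ∧ LNLarge π k N}
  have hε : ∀ k : ℕ, (0 : ℝ) < (1 / 2) ^ k := fun k => by positivity
  have step : ∀ (k : ℕ) (N : St k), ∃ N' : St (k + 1),
      (∀ i ≤ k, closure (N'.1 i) ⊆ N.1 i) ∧ closure (N'.1 (k + 1)) ⊆ N.1 (s k) ∧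
      Disjoint (closure (N'.1 (s k))) (closure (N'.1 (k + 1))) ∧
      (∀ i ≤ k + 1, ∀ u ∈ N'.1 i, ∀ v ∈ N'.1 i, dist u v < (1 / 2) ^ k) := by
    rintro k ⟨N, hN, hL⟩
    obtain ⟨N', h1, h2, h3⟩ := hL.split hπ hN (hs k) (hε k)
    exact ⟨⟨N', h1, h2⟩, h3⟩
  choose nx hnx1 hnx2 hnx3 hnx4 using step
  let S0 : St 0 := ⟨fun _ => univ, fun _ _ => isOpen_univ, by
    intro Z hZ
    have : ∃ p, p ∉ Z := by
      by_contra h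
      push Not at h
      exact hns (hZ.mono fun p _ => h p)
    obtain ⟨p, hp⟩ := this
    exact ⟨fun _ => p, fun i _ => ⟨mem_univ _, hp⟩, fun _ _ => rfl⟩⟩
  let S : ∀ k, St k := fun k => Nat.rec S0 (fun k N => nx k N) k
  let N : ℕ → ℕ → Set P := fun k => (S k).1
  have h1 : ∀ k, ∀ i ≤ k, closure (N (k + 1) i) ⊆ N k i := fun k => hnx1 k (S k)
  have h2 : ∀ k, closure (N (k + 1) (k + 1)) ⊆ N k (s k) := fun k => hnx2 k (S k)
  have h3 : ∀ k, Disjoint (closure (N (k + 1) (s k))) (closure (N (k + 1) (k + 1))) :=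
    fun k => hnx3 k (S k)
  have h4 : ∀ k, ∀ i ≤ k + 1, ∀ u ∈ N (k + 1) i, ∀ v ∈ N (k + 1) i, dist u v < (1 / 2) ^ k :=
    fun k => hnx4 k (S k)
  have hmono : ∀ n m, n ≤ m → ∀ i ≤ n, N m i ⊆ N n i := by
    intro n m hnm i hi
    induction m, hnm using Nat.le_induction with
    | base => exact subset_rfl
    | succ m hm ih => exact (subset_closure.trans (h1 m i (hi.trans hm))).trans ih
  have hpt : ∀ k, ∃ a : ℕ → P, (∀ i ≤ k, a i ∈ N k i) ∧ ∀ i ≤ k, π (a i) = π (a 0) := by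
    intro k
    obtain ⟨a, ha, ha'⟩ := (S k).2.2 ∅
      ⟨fun _ => ∅, fun n => ⟨MeasurableSet.empty, by simp⟩, by simp⟩
    exact ⟨a, fun i hi => (ha i hi).1, ha'⟩
  choose a haN haπ using hpt
  have conv : ∀ (n i : ℕ → ℕ), (∀ j, n j < n (j + 1)) → (∀ j, i j ≤ n j) →
      (∀ j, N (n (j + 1)) (i (j + 1)) ⊆ N (n j) (i j)) →
      ∃ p, Filter.Tendsto (fun j => a (n j) (i j)) Filter.atTop (nhds p) ∧
        ∀ j, p ∈ closure (N (n j) (i j)) := by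
    intro n i hn hi hsub
    have hn' : StrictMono n := strictMono_nat_of_lt_succ hn
    have hanti : ∀ j l, j ≤ l → N (n l) (i l) ⊆ N (n j) (i j) := by
      intro j l hjl
      induction l, hjl using Nat.le_induction with
      | base => exact subset_rfl
      | succ m hm ih => exact (hsub m).trans ih
    have hmem : ∀ j l, j ≤ l → a (n l) (i l) ∈ N (n j) (i j) := fun j l hjl =>
      hanti j l hjl (haN _ _ (hi l))
    have hC : CauchySeq (fun j => a (n j) (i j)) := by
      rw [Metric.cauchySeq_iff]
      intro ε hε
      obtain ⟨K, hK⟩ := exists_pow_lt_of_lt_one hε (by norm_num : (1 / 2 : ℝ) < 1)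
      refine ⟨K + 1, fun l hl l' hl' => ?_⟩
      have hnK : K + 1 ≤ n (K + 1) := hn'.id_le _
      obtain ⟨q, hq⟩ : ∃ q, n (K + 1) = q + 1 := ⟨n (K+1) - 1, by omega⟩
      have e1 := hmem (K + 1) l hl
      have e2 := hmem (K + 1) l' hl'
      have e3 := hi (K + 1)
      rw [hq] at e1 e2 e3
      refine (h4 q _ e3 _ e1 _ e2).trans_le (le_trans ?_ hK.le)
      exact pow_le_pow_of_le_one (by norm_num) (by norm_num) (by omega)
    obtain ⟨p, hp⟩ := cauchySeq_tendsto_of_complete hC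
    refine ⟨p, hp, fun j => ?_⟩
    exact mem_closure_of_tendsto hp (Filter.eventually_atTop.2 ⟨j, fun l hl => hmem j l hl⟩)
  obtain ⟨p0, hp0, -⟩ := conv (fun j => j) (fun _ => 0) (fun j => Nat.lt_succ_self j)
    (fun j => Nat.zero_le _) (fun j => subset_closure.trans (h1 j 0 (Nat.zero_le _)))
  have hx : Filter.Tendsto (fun k => π (a k 0)) Filter.atTop (nhds (π p0)) :=
    (hπ.tendsto p0).comp hp0
  obtain ⟨y, hy⟩ := (hc (π p0)).exists_eq_range ⟨p0, rfl⟩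
  have bstep : ∀ (j : ℕ) (q : {q : ℕ × ℕ // q.2 ≤ q.1}), ∃ q' : {q : ℕ × ℕ // q.2 ≤ q.1},
      q.1.1 < q'.1.1 ∧ N q'.1.1 q'.1.2 ⊆ N q.1.1 q.1.2 ∧ y j ∉ closure (N q'.1.1 q'.1.2) := by
    rintro j ⟨⟨n, i⟩, hi⟩
    simp only at hi
    obtain ⟨m, hnm, hm⟩ := hs' i n
    by_cases hyj : y j ∈ closure (N (m + 1) i)
    · refine ⟨⟨(m + 1, m + 1), le_rfl⟩, Nat.lt_succ_of_le hnm, ?_, ?_⟩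
      · refine (subset_closure.trans (h2 m)).trans ?_
        rw [hm]; exact hmono n m hnm i hi
      · have := h3 m
        rw [hm] at this
        exact Set.disjoint_left.1 this hyj
    · refine ⟨⟨(m + 1, i), by simp only; omega⟩, Nat.lt_succ_of_le hnm, ?_, hyj⟩
      exact hmono n (m + 1) (by omega) i hi
  choose bn hb1 hb2 hb3 using bstep
  let b : ℕ → {q : ℕ × ℕ // q.2 ≤ q.1} := fun j => Nat.rec ⟨(0, 0), le_rfl⟩ (fun j q => bn j q) j
  have hbs : ∀ j, b (j + 1) = bn j (b j) := fun j => rfl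
  obtain ⟨p, hp, hpm⟩ := conv (fun j => (b j).1.1) (fun j => (b j).1.2)
    (fun j => by rw [hbs]; exact hb1 j (b j)) (fun j => (b j).2)
    (fun j => by rw [hbs]; exact hb2 j (b j))
  have hmn : StrictMono (fun j => (b j).1.1) :=
    strictMono_nat_of_lt_succ (fun j => by rw [hbs]; exact hb1 j (b j))
  have e1 : Filter.Tendsto (fun j => π (a (b j).1.1 (b j).1.2)) Filter.atTop (nhds (π p)) :=
    (hπ.tendsto p).comp hp
  have e2 : Filter.Tendsto (fun j => π (a (b j).1.1 (b j).1.2)) Filter.atTop (nhds (π p0)) := by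
    have := hx.comp hmn.tendsto_atTop
    refine this.congr fun j => ?_
    exact (haπ _ _ (b j).2).symm
  have e3 : p ∈ {q | π q = π p0} := tendsto_nhds_unique e1 e2
  rw [hy] at e3
  obtain ⟨j, hj⟩ := e3
  have := hpm (j + 1)
  rw [← hj, hbs] at this
  exact hb3 j (b j) this

theorem ln_cover [MeasurableSpace P] [StandardBorelSpace P]
    [MeasurableSpace Q] [StandardBorelSpace Q] {π : P → Q} (hπ : Measurable π)
    (hc : ∀ x, {p | π p = x}.Countable) : LNSmall π univ := by
  let := upgradeStandardBorel Q
  obtain ⟨t', ht', hcont, hpol⟩ : ∃ t' : TopologicalSpace P, BorelSpace P ∧ Continuous π ∧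
      PolishSpace P := by
    obtain ⟨t, hb, hp⟩ := ‹StandardBorelSpace P›.polish
    obtain ⟨t', hle, hcont, hpol⟩ := hπ.exists_continuous
    refine ⟨t', ⟨?_⟩, hcont, hpol⟩
    rw [hb.measurable_eq]
    exact (borel_eq_borel_of_le hpol hp hle).symm
  let := TopologicalSpace.upgradeIsCompletelyMetrizable P
  exact ln_cover_metric hcont hc

theorem cber_enum {X : Type*} [MeasurableSpace X] [StandardBorelSpace X] {E : X → X → Prop}
    (hr : ∀ x, E x x) (hm : MeasurableSet {p : X × X | E p.1 p.2})
    (hc : ∀ x : X, {y | E x y}.Countable) :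
    ∃ e : ℕ → X → X, (∀ n, Measurable (e n)) ∧ (∀ n x, E x (e n x)) ∧
      ∀ x y, E x y → ∃ n, e n x = y := by
  classical
  let P := {p : X × X // E p.1 p.2}
  have : StandardBorelSpace P := hm.standardBorel
  have hπ : Measurable (fun p : P => p.1.1) := measurable_fst.comp measurable_subtype_coe
  have hπ2 : Measurable (fun p : P => p.1.2) := measurable_snd.comp measurable_subtype_coe
  obtain ⟨Z, hZ, hcov⟩ := ln_cover hπ (by
    intro x
    refine MapsTo.countable_of_injOn (f := fun p : P => p.1.2) (t := {y | E x y}) ?_ ?_ (hc x)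
    · rintro ⟨⟨x', y⟩, h⟩ (rfl : x' = x)
      exact h
    · rintro ⟨⟨x', y⟩, h⟩ (rfl : x' = x) ⟨⟨x'', y'⟩, h'⟩ (rfl : x'' = x') (hh : y = y')
      subst hh
      rfl)
  have hD : ∀ n (V : Set X), MeasurableSet V →
      MeasurableSet ((fun p : P => p.1.1) '' (Z n ∩ (fun p : P => p.1.2) ⁻¹' V)) := by
    intro n V hV
    exact ((hZ n).1.inter (hπ2 hV)).image_of_measurable_injOn hπ
      ((hZ n).2.mono inter_subset_left)
  let e : ℕ → X → X := fun n x =>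
    if h : ∃ p : P, p ∈ Z n ∧ p.1.1 = x then h.choose.1.2 else x
  have he1 : ∀ n (p : P), p ∈ Z n → e n p.1.1 = p.1.2 := by
    intro n p hp
    have h : ∃ p' : P, p' ∈ Z n ∧ p'.1.1 = p.1.1 := ⟨p, hp, rfl⟩
    have h' := h.choose_spec
    simp only [e, dif_pos h]
    rw [(hZ n).2 h'.1 hp h'.2]
  have he2 : ∀ n x, (¬ ∃ p : P, p ∈ Z n ∧ p.1.1 = x) → e n x = x := by
    intro n x h
    simp only [e, dif_neg h]
  refine ⟨e, ?_, ?_, ?_⟩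
  · intro n V hV
    have : e n ⁻¹' V = ((fun p : P => p.1.1) '' (Z n ∩ (fun p : P => p.1.2) ⁻¹' V)) ∪
        (((fun p : P => p.1.1) '' (Z n ∩ (fun p : P => p.1.2) ⁻¹' univ))ᶜ ∩ V) := by
      ext x
      by_cases h : ∃ p : P, p ∈ Z n ∧ p.1.1 = x
      · obtain ⟨p, hp, rfl⟩ := h
        rw [mem_preimage, he1 n p hp]
        constructor
        · intro hv
          exact Or.inl ⟨p, ⟨hp, hv⟩, rfl⟩
        · rintro (⟨q, ⟨hq, hv⟩, h⟩ | ⟨h, -⟩)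
          · rwa [← (hZ n).2 hq hp h]
          · exact absurd ⟨p, ⟨hp, mem_univ _⟩, rfl⟩ h
      · rw [mem_preimage, he2 n x h]
        constructor
        · intro hv
          refine Or.inr ⟨?_, hv⟩
          rintro ⟨q, ⟨hq, -⟩, h'⟩
          exact h ⟨q, hq, h'⟩
        · rintro (⟨q, ⟨hq, hv⟩, h'⟩ | ⟨-, hv⟩)
          · exact absurd ⟨q, hq, h'⟩ h
          · exact hv
    rw [this]
    exact (hD n V hV).union ((hD n univ MeasurableSet.univ).compl.inter hV)
  · intro n x
    by_cases h : ∃ p : P, p ∈ Z n ∧ p.1.1 = x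
    · obtain ⟨p, hp, rfl⟩ := h
      rw [he1 n p hp]; exact p.2
    · rw [he2 n x h]; exact hr x
  · intro x y hxy
    obtain ⟨n, hn⟩ := mem_iUnion.1 (hcov (mem_univ (⟨(x, y), hxy⟩ : P)))
    exact ⟨n, he1 n ⟨(x, y), hxy⟩ hn⟩

end LN

section Pack
variable {X : Type*} [MeasurableSpace X] [StandardBorelSpace X]

lemma exists_coloring {E : X → X → Prop} {e : ℕ → X → X} (hem : ∀ n, Measurable (e n))
    (hes : ∀ x y, E x y → ∃ n, e n x = y) {R : X → X → Prop}
    (hRE : ∀ x y, R x y → E x y) (hR : MeasurableSet {p : X × X | R p.1 p.2})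
    (hfin : ∀ x, {y | R x y}.Finite) :
    ∃ c : X → ℕ, Measurable c ∧ ∀ x y, x ≠ y → R x y → c x ≠ c y := by
  classical
  let := upgradeStandardBorel X
  rcases isEmpty_or_nonempty X with hX | hX
  · exact ⟨fun _ => 0, measurable_const, fun x => (hX.false x).elim⟩
  obtain ⟨V, hV⟩ := (TopologicalSpace.countable_countableBasis X).exists_eq_range
    (by
      obtain ⟨x⟩ := hX
      obtain ⟨W, hW, -⟩ := (TopologicalSpace.isBasis_countableBasis X).exists_subset_of_mem_open
        (mem_univ x) isOpen_univ
      exact ⟨W, hW⟩)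
  have hVo : ∀ n, IsOpen (V n) := fun n =>
    TopologicalSpace.isOpen_of_mem_countableBasis (by rw [hV]; exact ⟨n, rfl⟩)
  let p : X → ℕ → Prop := fun x n => x ∈ V n ∧ ∀ k, R x (e k x) → e k x ≠ x → e k x ∉ V n
  have hp : ∀ x, ∃ n, p x n := by
    intro x
    have hf : ({y | R x y} \ {x}).Finite := (hfin x).subset sdiff_subset
    obtain ⟨W, hW, hxW, hWs⟩ := (TopologicalSpace.isBasis_countableBasis X).exists_subset_of_mem_open
      (show x ∈ ({y | R x y} \ {x})ᶜ by simp) hf.isClosed.isOpen_compl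
    rw [hV] at hW
    obtain ⟨n, rfl⟩ := hW
    exact ⟨n, hxW, fun k h1 h2 h3 => hWs h3 ⟨h1, h2⟩⟩
  have hm : ∀ n, MeasurableSet {x | p x n} := by
    intro n
    have : {x | p x n} = V n ∩ ⋂ k, ((fun x => (x, e k x)) ⁻¹' {p : X × X | R p.1 p.2})ᶜ ∪
        ({x | e k x = x} ∪ (e k ⁻¹' (V n))ᶜ) := by
      ext x
      simp only [p, mem_ofPred_eq, mem_inter_iff, mem_iInter, mem_union, mem_compl_iff,
        mem_preimage]
      refine and_congr Iff.rfl (forall_congr' fun k => ?_)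
      tauto
    rw [this]
    refine (hVo n).measurableSet.inter (MeasurableSet.iInter fun k => ?_)
    refine ((measurable_id.prodMk (hem k)) hR).compl.union
      ((measurableSet_eq_fun (hem k) measurable_id).union (hem k (hVo n).measurableSet).compl)
  refine ⟨fun x => Nat.find (hp x), measurable_find hp hm, ?_⟩
  intro x y hxy hRxy heq
  obtain ⟨k, hk⟩ := hes x y (hRE x y hRxy)
  have h1 := (Nat.find_spec (hp x)).2 k (by rwa [hk]) (by rw [hk]; exact hxy.symm)
  have h2 := (Nat.find_spec (hp y)).1
  simp only at heq
  rw [hk, heq] at h1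
  exact h1 h2

lemma exists_packing {E : X → X → Prop} (hE : Equivalence E)
    {e : ℕ → X → X} (hem : ∀ n, Measurable (e n))
    (hes : ∀ x y, E x y → ∃ n, e n x = y)
    {J : Type*} [Countable J] [Nonempty J] (S : J → X → Set X) (G : J → Set X)
    (hG : ∀ j, MeasurableSet (G j))
    (hSE : ∀ j x y, y ∈ S j x → E x y)
    (hSm : ∀ j, MeasurableSet {p : X × X | p.2 ∈ S j p.1})
    (hSf : ∀ j x, (S j x).Finite) (hSn : ∀ j, ∀ x ∈ G j, (S j x).Nonempty)
    (hSb : ∀ j y, {x | x ∈ G j ∧ y ∈ S j x}.Finite) :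
    ∃ A : J → Set X, (∀ j, MeasurableSet (A j)) ∧ (∀ j, A j ⊆ G j) ∧
      (∀ j x j' x' y, x ∈ A j → x' ∈ A j' → y ∈ S j x → y ∈ S j' x' → j = j' ∧ x = x') ∧
      (∀ j, ∀ x ∈ G j, ∃ j' x' y, x' ∈ A j' ∧ y ∈ S j x ∧ y ∈ S j' x') := by
  classical
  have hcol : ∀ j, ∃ c : X → ℕ, Measurable c ∧ ∀ x x', x ≠ x' →
      (x ∈ G j ∧ x' ∈ G j ∧ ∃ k, e k x ∈ S j x ∧ e k x ∈ S j x') → c x ≠ c x' := by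
    intro j
    refine exists_coloring (E := E) hem hes ?_ ?_ ?_
    · rintro x x' ⟨_, _, k, h1, h2⟩
      exact hE.trans (hSE j _ _ h1) (hE.symm (hSE j _ _ h2))
    · have : {p : X × X | p.1 ∈ G j ∧ p.2 ∈ G j ∧ ∃ k, e k p.1 ∈ S j p.1 ∧ e k p.1 ∈ S j p.2} =
        (Prod.fst ⁻¹' G j) ∩ ((Prod.snd ⁻¹' G j) ∩ ⋃ k,
          ((fun p : X × X => (p.1, e k p.1)) ⁻¹' {p : X × X | p.2 ∈ S j p.1} ∩
           (fun p : X × X => (p.2, e k p.1)) ⁻¹' {p : X × X | p.2 ∈ S j p.1})) := by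
        ext p; simp
      rw [this]
      refine (measurable_fst (hG j)).inter ((measurable_snd (hG j)).inter
        (MeasurableSet.iUnion fun k => ?_))
      exact ((measurable_fst.prodMk ((hem k).comp measurable_fst)) (hSm j)).inter
        ((measurable_snd.prodMk ((hem k).comp measurable_fst)) (hSm j))
    · intro x
      refine ((hSf j x).biUnion (fun y _ => hSb j y)).subset ?_
      rintro x' ⟨_, h, k, h1, h2⟩
      exact mem_biUnion h1 ⟨h, h2⟩
  choose c hcm hc using hcol
  obtain ⟨u, hu⟩ := exists_surjective_nat (J × ℕ)
  let A' : ℕ → Set X → Set X := fun m K =>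
    {x | x ∈ G (u m).1 ∧ c (u m).1 x = (u m).2 ∧ ∀ k, e k x ∈ S (u m).1 x → e k x ∉ K}
  let nxt : ℕ → Set X → Set X := fun m K =>
    K ∪ {y | ∃ k, e k y ∈ A' m K ∧ y ∈ S (u m).1 (e k y)}
  let Cov : ℕ → Set X := fun m => Nat.rec ∅ nxt m
  have hCs : ∀ m, Cov (m + 1) = nxt m (Cov m) := fun m => rfl
  have hA'm : ∀ m K, MeasurableSet K → MeasurableSet (A' m K) := by
    intro m K hK
    have : A' m K = G (u m).1 ∩ (c (u m).1 ⁻¹' {(u m).2} ∩ ⋂ k,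
        (((fun x => (x, e k x)) ⁻¹' {p : X × X | p.2 ∈ S (u m).1 p.1})ᶜ ∪ (e k ⁻¹' K)ᶜ)) := by
      ext x
      simp only [A', mem_ofPred_eq, mem_inter_iff, mem_iInter, mem_union, mem_compl_iff,
        mem_preimage, mem_singleton_iff]
      refine and_congr Iff.rfl (and_congr Iff.rfl (forall_congr' fun k => ?_))
      tauto
    rw [this]
    refine (hG _).inter ((hcm _ (measurableSet_singleton _)).inter
      (MeasurableSet.iInter fun k => ?_))
    exact ((measurable_id.prodMk (hem k)) (hSm _)).compl.union (hem k hK).compl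
  have hCm : ∀ m, MeasurableSet (Cov m) := by
    intro m
    induction m with
    | zero => exact MeasurableSet.empty
    | succ m ih =>
      rw [hCs]
      refine ih.union ?_
      have : {y | ∃ k, e k y ∈ A' m (Cov m) ∧ y ∈ S (u m).1 (e k y)} =
          ⋃ k, (e k ⁻¹' A' m (Cov m) ∩
            (fun y => (e k y, y)) ⁻¹' {p : X × X | p.2 ∈ S (u m).1 p.1}) := by
        ext y; simp
      rw [this]
      exact MeasurableSet.iUnion fun k => (hem k (hA'm m _ ih)).inter
        (((hem k).prodMk measurable_id) (hSm _))
  have hmono : ∀ m m', m ≤ m' → Cov m ⊆ Cov m' := by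
    intro m m' h
    induction m', h using Nat.le_induction with
    | base => exact subset_rfl
    | succ n _ ih => exact ih.trans subset_union_left
  have hmem : ∀ m x y, x ∈ A' m (Cov m) → y ∈ S (u m).1 x → y ∈ Cov (m + 1) := by
    intro m x y hx hy
    obtain ⟨k, hk⟩ := hes y x (hE.symm (hSE _ _ _ hy))
    exact Or.inr ⟨k, by rwa [hk], by rwa [hk]⟩
  have hcovmem : ∀ m y, y ∈ Cov m → ∃ n x, x ∈ A' n (Cov n) ∧ y ∈ S (u n).1 x := by
    intro m
    induction m with
    | zero => intro y hy; exact absurd hy (notMem_empty y)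
    | succ m ih =>
      rintro y (hy | ⟨k, h1, h2⟩)
      · exact ih y hy
      · exact ⟨m, _, h1, h2⟩
  have hdisj : ∀ m x y, x ∈ A' m (Cov m) → y ∈ S (u m).1 x → y ∉ Cov m := by
    intro m x y hx hy
    obtain ⟨k, hk⟩ := hes x y (hSE _ _ _ hy)
    have := hx.2.2 k
    rw [hk] at this
    exact this hy
  refine ⟨fun j => ⋃ m, ⋃ (_ : (u m).1 = j), A' m (Cov m), ?_, ?_, ?_, ?_⟩
  · exact fun j => MeasurableSet.iUnion fun m => MeasurableSet.iUnion fun _ => hA'm m _ (hCm m)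
  · intro j x hx
    simp only [mem_iUnion] at hx
    obtain ⟨m, rfl, hx⟩ := hx
    exact hx.1
  · intro j x j' x' y hx hx' hy hy'
    simp only [mem_iUnion] at hx hx'
    obtain ⟨m, rfl, hx⟩ := hx
    obtain ⟨m', rfl, hx'⟩ := hx'
    rcases lt_trichotomy m m' with h | h | h
    · exact absurd (hmono (m + 1) m' h (hmem m x y hx hy)) (hdisj m' x' y hx' hy')
    · subst h
      refine ⟨rfl, ?_⟩
      by_contra hne
      obtain ⟨k, hk⟩ := hes x y (hSE _ _ _ hy)
      exact hc _ x x' hne ⟨hx.1, hx'.1, k, by rwa [hk], by rwa [hk]⟩ (hx.2.1.trans hx'.2.1.symm)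
    · exact absurd (hmono (m' + 1) m h (hmem m' x' y hx' hy')) (hdisj m x y hx hy)
  · intro j x hx
    obtain ⟨m, hm⟩ := hu (j, c j x)
    rcases Classical.em (x ∈ A' m (Cov m)) with h | h
    · obtain ⟨y, hy⟩ := hSn j x hx
      exact ⟨j, x, y, mem_iUnion.2 ⟨m, mem_iUnion.2 ⟨by rw [hm], h⟩⟩, hy, hy⟩
    · have : ∃ k, e k x ∈ S j x ∧ e k x ∈ Cov m := by
        by_contra hcon
        push Not at hcon
        refine h ⟨by rw [hm]; exact hx, by rw [hm], ?_⟩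
        rw [hm]; exact hcon
      obtain ⟨k, h1, h2⟩ := this
      obtain ⟨n, x', h3, h4⟩ := hcovmem m _ h2
      exact ⟨_, x', _, mem_iUnion.2 ⟨n, mem_iUnion.2 ⟨rfl, h3⟩⟩, h1, h4⟩

lemma exists_good_finsets {X : Type*} {W : Set X} (hW : W.Infinite) {α β : X → ℝ} {a b t r : ℝ}
    (ha : 0 < a) (hb : 0 < b) (ht : 0 < t) (htr : t ^ 2 < r)
    (hα : ∀ z ∈ W, a ≤ α z ∧ α z ≤ a * t) (hβ : ∀ z ∈ W, b ≤ β z ∧ β z ≤ b * t) :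
    ∃ C D : Finset X, Disjoint C D ∧ C.Nonempty ∧ ↑C ⊆ W ∧ ↑D ⊆ W ∧
      ∑ z ∈ C, α z ≤ ∑ z ∈ D, β z ∧ ∑ z ∈ D, β z ≤ r * ∑ z ∈ C, α z := by
  classical
  have h1 : t * a / b < r / t * a / b := by
    have : t < r / t := by rw [lt_div_iff₀ ht]; nlinarith
    gcongr
  obtain ⟨q, hq1, hq2⟩ := exists_rat_btwn h1
  have hq0 : (0 : ℝ) < q := lt_trans (by positivity) hq1
  have hq0' : 0 < q := by exact_mod_cast hq0
  obtain ⟨k, l, hk, hkl⟩ : ∃ k l : ℕ, 0 < k ∧ (q : ℝ) = l / k := by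
    refine ⟨q.den, q.num.toNat, q.den_pos, ?_⟩
    have hn : (q.num.toNat : ℤ) = q.num := Int.toNat_of_nonneg (Rat.num_nonneg.2 hq0'.le)
    have : (q : ℝ) = (q.num : ℝ) / (q.den : ℝ) := by exact_mod_cast (Rat.num_div_den q).symm
    have hn' : ((q.num.toNat : ℕ) : ℝ) = (q.num : ℝ) := by exact_mod_cast congrArg (Int.cast (R := ℝ)) hn
    rw [this, hn']
  have hk' : (0 : ℝ) < k := by exact_mod_cast hk
  rw [hkl] at hq1 hq2
  obtain ⟨C, hCW, hCc⟩ := hW.exists_subset_card_eq k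
  obtain ⟨D, hDW, hDc⟩ := (hW.sdiff C.finite_toSet).exists_subset_card_eq l
  refine ⟨C, D, ?_, Finset.card_pos.1 (by omega), hCW, hDW.trans sdiff_subset, ?_, ?_⟩
  · rw [Finset.disjoint_left]
    intro z hz hz'
    exact (hDW hz').2 hz
  · have e1 : ∑ z ∈ C, α z ≤ k * (a * t) := by
      rw [← hCc, ← nsmul_eq_mul]
      exact Finset.sum_le_card_nsmul _ _ _ fun z hz => (hα z (hCW hz)).2
    have e2 : l * b ≤ ∑ z ∈ D, β z := by
      rw [← hDc, ← nsmul_eq_mul]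
      exact Finset.card_nsmul_le_sum _ _ _ fun z hz => (hβ z (hDW hz).1).1
    rw [div_lt_div_iff₀ hb hk'] at hq1
    nlinarith
  · have e1 : k * a ≤ ∑ z ∈ C, α z := by
      rw [← hCc, ← nsmul_eq_mul]
      exact Finset.card_nsmul_le_sum _ _ _ fun z hz => (hα z (hCW hz)).1
    have e2 : ∑ z ∈ D, β z ≤ l * (b * t) := by
      rw [← hDc, ← nsmul_eq_mul]
      exact Finset.sum_le_card_nsmul _ _ _ fun z hz => (hβ z (hDW hz).1).2
    have hr0 : 0 < r := lt_trans (by positivity) htr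
    have e3 : r * (k * a) ≤ r * ∑ z ∈ C, α z := by gcongr
    rw [div_lt_div_iff₀ hk' hb] at hq2
    have e4 : l * b * t < r / t * a * k * t := by gcongr
    have e5 : r / t * a * k * t = r * (k * a) := by field_simp
    nlinarith

end Pack

section Main
variable {X : Type*} [MeasurableSpace X] [StandardBorelSpace X]

lemma abs_sub_lt_of_floor_eq {a b δ : ℝ} (hδ : 0 < δ) (h : ⌊a / δ⌋ = ⌊b / δ⌋) :
    |a - b| < δ := by
  have := Int.abs_sub_lt_one_of_floor_eq_floor h
  rw [← sub_div, abs_div, abs_of_pos hδ, div_lt_one hδ] at this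
  exact this

lemma smooth_part {E : X → X → Prop} (hE : Equivalence E)
    (hEm : MeasurableSet {p : X × X | E p.1 p.2})
    {e : ℕ → X → X} (hem : ∀ n, Measurable (e n)) (heE : ∀ n x, E x (e n x))
    (hes : ∀ x y, E x y → ∃ n, e n x = y)
    {ρ : X → X → ℝ} (hρ : IsCocycle E ρ) {f g : X → ℝ} (hf : Measurable f) (hg : Measurable g)
    (hf0 : ∀ x, 0 ≤ f x) (hg0 : ∀ x, 0 ≤ g x)
    {r : ℝ} (hr : 1 < r) {Y : Set X} (hYm : MeasurableSet Y)
    (hY : ∀ (x : X) (C D : Finset X), Disjoint C D → (C.Nonempty ∨ D.Nonempty) →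
      (∀ z ∈ C, z ∈ Y ∧ E x z) → (∀ z ∈ D, z ∈ Y ∧ E x z) →
      ¬ (∑ z ∈ C, f z * ρ z x ≤ ∑ z ∈ D, g z * ρ z x ∧
        ∑ z ∈ D, g z * ρ z x ≤ r * ∑ z ∈ C, f z * ρ z x)) :
    SmoothOn E ρ {x | ∃ k, e k x ∈ Y} := by
  classical
  obtain ⟨hρm, hρ0, hρc⟩ := hρ
  have hfp : ∀ z ∈ Y, 0 < f z := by
    intro z hz
    refine (hf0 z).lt_of_ne' fun h => hY z {z} ∅ (by simp) (by simp) ?_ (by simp) (by simp [h])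
    intro w hw
    rw [Finset.mem_singleton] at hw
    subst hw
    exact ⟨hz, hE.refl _⟩
  have hgp : ∀ z ∈ Y, 0 < g z := by
    intro z hz
    refine (hg0 z).lt_of_ne' fun h => hY z ∅ {z} (by simp) (by simp) (by simp) ?_ (by simp [h])
    intro w hw
    rw [Finset.mem_singleton] at hw
    subst hw
    exact ⟨hz, hE.refl _⟩
  let L : X → X → ℝ := fun x y => Real.log (ρ x y)
  have hLm : Measurable (fun p : X × X => L p.1 p.2) := Real.measurable_log.comp hρm
  have hLc : ∀ x y z, E x y → E y z → L x z = L x y + L y z := by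
    intro x y z h1 h2
    simp only [L]
    rw [hρc h1 h2, Real.log_mul (hρ0 h1).ne' (hρ0 h2).ne']
  have hLr : ∀ x, L x x = 0 := by
    intro x
    have := hLc x x x (hE.refl x) (hE.refl x)
    linarith
  have hLs : ∀ x y, E x y → L y x = - L x y := by
    intro x y h
    have := hLc x y x h (hE.symm h)
    rw [hLr] at this
    linarith
  let δ : ℝ := Real.log r / 13
  have hδ : 0 < δ := div_pos (Real.log_pos hr) (by norm_num)
  let W : Set X := {x | ∃ k, e k x ∈ Y}
  have hWm : MeasurableSet W := by
    have : W = ⋃ k, e k ⁻¹' Y := by ext x; simp [W]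
    rw [this]
    exact MeasurableSet.iUnion fun k => hem k hYm
  have hn : ∀ x, ∃ n, e n x ∈ Y ∨ x ∉ W := by
    intro x
    by_cases hx : x ∈ W
    · obtain ⟨k, hk⟩ := hx
      exact ⟨k, Or.inl hk⟩
    · exact ⟨0, Or.inr hx⟩
  let n : X → ℕ := fun x => Nat.find (hn x)
  have hnm : Measurable n := measurable_find hn fun k => (hem k hYm).union hWm.compl
  let φ : X → X := fun x => e (n x) x
  have heu : Measurable (fun p : ℕ × X => e p.1 p.2) :=
    measurable_from_prod_countable_right fun k => hem k
  have hφm : Measurable φ := heu.comp (hnm.prodMk measurable_id)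
  have hφY : ∀ x ∈ W, φ x ∈ Y := by
    intro x hx
    rcases Nat.find_spec (hn x) with h | h
    · exact h
    · exact absurd hx h
  have hφE : ∀ x, E x (φ x) := fun x => heE _ _
  have hm : ∀ x, ∃ m, e m (φ x) = x := fun x => hes _ _ (hE.symm (hφE x))
  let m : X → ℕ := fun x => Nat.find (hm x)
  have hmm : Measurable m := measurable_find hm fun k =>
    measurableSet_eq_fun ((hem k).comp hφm) measurable_id
  have hmφ : ∀ x, e (m x) (φ x) = x := fun x => Nat.find_spec (hm x)
  let code : X → ℕ × ℤ × ℤ × ℤ := fun x =>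
    (m x, ⌊L x (φ x) / δ⌋, ⌊Real.log (f (φ x)) / δ⌋, ⌊Real.log (g (φ x)) / δ⌋)
  have hcm : Measurable code := by
    refine hmm.prodMk (Measurable.prodMk ?_ (Measurable.prodMk ?_ ?_))
    · exact Int.measurable_floor.comp ((hLm.comp (measurable_id.prodMk hφm)).div_const δ)
    · exact Int.measurable_floor.comp
        ((Real.measurable_log.comp (hf.comp hφm)).div_const δ)
    · exact Int.measurable_floor.comp
        ((Real.measurable_log.comp (hg.comp hφm)).div_const δ)
  let R : X → X → Prop := fun x y => E x y ∧ (x ∈ W ∧ y ∈ W) ∧ |L x y| < δ ∧ code x = code y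
  have hRm : MeasurableSet {p : X × X | R p.1 p.2} := by
    refine hEm.inter (((measurable_fst hWm).inter (measurable_snd hWm)).inter
      (MeasurableSet.inter ?_ ?_))
    · exact measurableSet_lt (continuous_abs.measurable.comp hLm) measurable_const
    · exact measurableSet_eq_fun (hcm.comp measurable_fst) (hcm.comp measurable_snd)
  have hRfin : ∀ x, {y | R x y}.Finite := by
    intro x
    by_contra hinf
    have hinf : {y | R x y}.Infinite := hinf
    have hinj : InjOn φ {y | R x y} := by
      rintro y ⟨_, _, _, hy⟩ y' ⟨_, _, _, hy'⟩ h
      have h1 : m y = m y' := congrArg Prod.fst (hy.symm.trans hy')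
      rw [← hmφ y, ← hmφ y', h1, h]
    have hxW : x ∈ W := by
      obtain ⟨y, hy⟩ := hinf.nonempty
      exact hy.2.1.1
    have hI := hinf.image hinj
    have hfx := hfp _ (hφY x hxW)
    have hgx := hgp _ (hφY x hxW)
    have hkey : ∀ z ∈ φ '' {y | R x y}, z ∈ Y ∧ E (φ x) z ∧ |L z (φ x)| < 2 * δ ∧
        |Real.log (f z) - Real.log (f (φ x))| < δ ∧ |Real.log (g z) - Real.log (g (φ x))| < δ := by
      rintro z ⟨y, ⟨hxy, ⟨_, hyW⟩, hL, hc⟩, rfl⟩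
      have h2 : ⌊L x (φ x) / δ⌋ = ⌊L y (φ y) / δ⌋ := congrArg (fun c => c.2.1) hc
      have h3 : ⌊Real.log (f (φ x)) / δ⌋ = ⌊Real.log (f (φ y)) / δ⌋ :=
        congrArg (fun c => c.2.2.1) hc
      have h4 : ⌊Real.log (g (φ x)) / δ⌋ = ⌊Real.log (g (φ y)) / δ⌋ :=
        congrArg (fun c => c.2.2.2) hc
      refine ⟨hφY y hyW, hE.trans (hE.symm (hφE x)) (hE.trans hxy (hφE y)), ?_,
        abs_sub_lt_of_floor_eq hδ h3.symm, abs_sub_lt_of_floor_eq hδ h4.symm⟩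
      have e1 := abs_sub_lt_of_floor_eq hδ h2
      have e2 : L (φ y) (φ x) = L x (φ x) - L y (φ y) - L x y := by
        rw [hLc (φ y) y (φ x) (hE.symm (hφE y)) (hE.trans (hE.symm hxy) (hφE x)),
          hLc y x (φ x) (hE.symm hxy) (hφE x), hLs y (φ y) (hφE y), hLs x y hxy]
        ring
      rw [e2]
      rw [abs_lt] at e1 hL ⊢
      constructor <;> linarith
    have hbd : ∀ (h : X → ℝ) (z : X), 0 < h z → 0 < h (φ x) → E (φ x) z → |L z (φ x)| < 2 * δ →
        |Real.log (h z) - Real.log (h (φ x))| < δ →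
        h (φ x) * Real.exp (-(3 * δ)) ≤ h z * ρ z (φ x) ∧
        h z * ρ z (φ x) ≤ h (φ x) * Real.exp (-(3 * δ)) * Real.exp (6 * δ) := by
      intro h z hz hx' hEz hLz hlog
      have hρz := hρ0 (hE.symm hEz)
      have e0 : h z * ρ z (φ x) = Real.exp (Real.log (h z) + L z (φ x)) := by
        rw [Real.exp_add, Real.exp_log hz, Real.exp_log hρz]
      have e1 : h (φ x) = Real.exp (Real.log (h (φ x))) := (Real.exp_log hx').symm
      rw [e0, e1, ← Real.exp_add, ← Real.exp_add, Real.exp_le_exp, Real.exp_le_exp]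
      rw [abs_lt] at hLz hlog
      constructor <;> linarith
    obtain ⟨C, D, hCD, hCn, hCW, hDW, h1, h2⟩ := exists_good_finsets hI
      (α := fun z => f z * ρ z (φ x)) (β := fun z => g z * ρ z (φ x))
      (a := f (φ x) * Real.exp (-(3 * δ))) (b := g (φ x) * Real.exp (-(3 * δ)))
      (t := Real.exp (6 * δ)) (r := r) (by positivity) (by positivity) (Real.exp_pos _)
      (by
        rw [← Real.exp_nat_mul, ← Real.exp_log (lt_trans one_pos hr), Real.exp_lt_exp]
        have : Real.log r = 13 * δ := by simp only [δ]; ring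
        rw [this]
        push_cast
        linarith)
      (fun z hz => by
        obtain ⟨k1, k2, k3, k4, k5⟩ := hkey z hz
        exact hbd f z (hfp z k1) hfx k2 k3 k4)
      (fun z hz => by
        obtain ⟨k1, k2, k3, k4, k5⟩ := hkey z hz
        exact hbd g z (hgp z k1) hgx k2 k3 k5)
    refine hY (φ x) C D hCD (Or.inl hCn) (fun z hz => ?_) (fun z hz => ?_) ⟨h1, h2⟩
    · have := hkey z (hCW hz)
      exact ⟨this.1, this.2.1⟩
    · have := hkey z (hDW hz)
      exact ⟨this.1, this.2.1⟩
  obtain ⟨c, hcmeas, hc⟩ := exists_coloring hem hes (fun x y h => h.1) hRm hRfin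
  refine ⟨Ioo (Real.exp (-δ)) (Real.exp δ), isOpen_Ioo, ?_, ?_,
    fun x => Encodable.encode (code x, c x), ?_, ?_⟩
  · constructor
    · rw [Real.exp_lt_one_iff]; linarith
    · rw [Real.one_lt_exp_iff]; exact hδ
  · exact fun u hu => (Real.exp_pos _).trans hu.1
  · exact (measurable_of_countable (Encodable.encode : (ℕ × ℤ × ℤ × ℤ) × ℕ → ℕ)).comp
      (hcm.prodMk hcmeas)
  · intro x y hx hy hxy hExy hU heq
    have heq := Encodable.encode_injective heq
    rw [Prod.mk.injEq] at heq
    refine hc x y hxy ⟨hExy, ⟨hx, hy⟩, ?_, heq.1⟩ heq.2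
    have := hρ0 hExy
    rw [abs_lt]
    exact ⟨(Real.lt_log_iff_exp_lt this).2 hU.1, (Real.log_lt_iff_lt_exp this).2 hU.2⟩

end Main

/-- Second approximation lemma for cocycles: given Borel `f, g : X → [0,∞)` and `r > 1`,
there are an `E`-invariant Borel set `B`, a Borel set `C ⊆ B`, and a finite Borel
subequivalence relation `F` of `E ↾ B` such that `ρ ↾ (E ↾ Bᶜ)` is smooth and
`∫_C f dμ^ρ_{[x]_F} ≤ ∫_{B∖C} g dμ^ρ_{[x]_F} ≤ r·∫_C f dμ^ρ_{[x]_F}` for all `x ∈ B`. -/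
theorem stmt19 [MeasurableSpace X] [StandardBorelSpace X]
    (E : X → X → Prop) (hE : IsCBER E)
    (ρ : X → X → ℝ) (hρ : IsCocycle E ρ)
    (f g : X → ℝ) (hf : Measurable f) (hf0 : ∀ x, 0 ≤ f x)
    (hg : Measurable g) (hg0 : ∀ x, 0 ≤ g x) (r : ℝ) (hr : 1 < r) :
    ∃ B C : Set X, MeasurableSet B ∧ EInvariant E B ∧ MeasurableSet C ∧ C ⊆ B ∧
      ∃ F : X → X → Prop, IsFinSubequivOn E B F ∧
        SmoothOn E ρ Bᶜ ∧
        ∀ x ∈ B,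
          avgOn ρ f {z | F z x} C x ≤ avgOn ρ g {z | F z x} (B \ C) x ∧
          avgOn ρ g {z | F z x} (B \ C) x ≤ r * avgOn ρ f {z | F z x} C x := by
  classical
  obtain ⟨hEq, hEm, hEc⟩ := hE
  obtain ⟨e, hem, heE, hes⟩ := cber_enum hEq.refl hEm hEc
  have hρ' := hρ
  obtain ⟨hρm, hρ0, hρc⟩ := hρ'
  let bl : Finset (ℕ × ℕ) → X → Finset X := fun l x => l.image (fun p => e p.1 x)
  let sf : Finset (ℕ × ℕ) → X → ℝ := fun l x => ∑ p ∈ l, f (e p.1 x) * ρ (e p.1 x) x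
  let sg : Finset (ℕ × ℕ) → X → ℝ := fun l x => ∑ p ∈ l, g (e p.1 x) * ρ (e p.1 x) x
  let J := Finset (ℕ × ℕ) × Finset (ℕ × ℕ)
  let S : J → X → Set X := fun j x => (bl (j.1 ∪ j.2) x : Set X)
  let G : J → Set X := fun j => {x | (∀ p ∈ j.1 ∪ j.2, e p.2 (e p.1 x) = x) ∧
    (∀ p ∈ j.1 ∪ j.2, ∀ q ∈ j.1 ∪ j.2, p ≠ q → e p.1 x ≠ e q.1 x) ∧
    (Disjoint j.1 j.2 ∧ (j.1 ∪ j.2).Nonempty) ∧ sf j.1 x ≤ sg j.2 x ∧ sg j.2 x ≤ r * sf j.1 x}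
  have hsm : ∀ (h : X → ℝ), Measurable h → ∀ l : Finset (ℕ × ℕ),
      Measurable (fun x => ∑ p ∈ l, h (e p.1 x) * ρ (e p.1 x) x) := by
    intro h hh l
    refine Finset.measurable_fun_sum l fun p _ => ?_
    exact (hh.comp (hem _)).mul (hρm.comp ((hem _).prodMk measurable_id))
  have hGm : ∀ j, MeasurableSet (G j) := by
    intro j
    have : G j = (⋂ p ∈ j.1 ∪ j.2, {x | e p.2 (e p.1 x) = x}) ∩
        ((⋂ p ∈ j.1 ∪ j.2, ⋂ q ∈ j.1 ∪ j.2, ⋂ (_ : p ≠ q), {x | e p.1 x = e q.1 x}ᶜ) ∩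
        ({_x | Disjoint j.1 j.2 ∧ (j.1 ∪ j.2).Nonempty} ∩
          ({x | sf j.1 x ≤ sg j.2 x} ∩ {x | sg j.2 x ≤ r * sf j.1 x}))) := by
      ext x
      simp only [G, mem_inter_iff, mem_iInter, mem_ofPred_eq, mem_compl_iff, ne_eq]
    rw [this]
    refine MeasurableSet.inter (Finset.measurableSet_biInter _ fun p _ => ?_)
      (MeasurableSet.inter (Finset.measurableSet_biInter _ fun p _ =>
        Finset.measurableSet_biInter _ fun q _ => MeasurableSet.iInter fun _ => ?_)
      (MeasurableSet.inter (MeasurableSet.const _) (MeasurableSet.inter ?_ ?_)))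
    · exact measurableSet_eq_fun ((hem _).comp (hem _)) measurable_id
    · exact (measurableSet_eq_fun (hem _) (hem _)).compl
    · exact measurableSet_le (hsm f hf _) (hsm g hg _)
    · exact measurableSet_le (hsm g hg _) ((hsm f hf _).const_mul r)
  have hblE : ∀ l x y, y ∈ bl l x → E x y := by
    intro l x y hy
    obtain ⟨p, _, rfl⟩ := Finset.mem_image.1 hy
    exact heE _ _
  have hblm : ∀ l, MeasurableSet {p : X × X | p.2 ∈ bl l p.1} := by
    intro l
    have : {p : X × X | p.2 ∈ bl l p.1} = ⋃ q ∈ l, {p : X × X | e q.1 p.1 = p.2} := by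
      ext p
      simp [bl]
    rw [this]
    exact Finset.measurableSet_biUnion _ fun q _ =>
      measurableSet_eq_fun ((hem _).comp measurable_fst) measurable_snd
  obtain ⟨A, hAm, hAG, hAd, hAmax⟩ := exists_packing hEq hem hes S G hGm
    (fun j x y hy => hblE _ _ _ hy) (fun j => hblm _) (fun j x => Finset.finite_toSet _)
    (fun j x hx => by
      obtain ⟨p, hp⟩ := hx.2.2.1.2
      exact ⟨e p.1 x, Finset.mem_coe.2 (Finset.mem_image_of_mem _ hp)⟩)
    (fun j y => by
      refine ((j.1 ∪ j.2).image (fun p => e p.2 y)).finite_toSet.subset ?_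
      rintro x ⟨hx, hy⟩
      obtain ⟨p, hp, rfl⟩ := Finset.mem_image.1 (Finset.mem_coe.1 hy)
      exact Finset.mem_coe.2 (Finset.mem_image.2 ⟨p, hp, hx.1 p hp⟩))
  have hexm : ∀ (l : J → Finset (ℕ × ℕ)),
      MeasurableSet {y | ∃ j, ∃ x ∈ A j, y ∈ bl (l j) x} := by
    intro l
    have : {y | ∃ j, ∃ x ∈ A j, y ∈ bl (l j) x} =
        ⋃ j, ⋃ k, (e k ⁻¹' A j ∩ (fun y => (e k y, y)) ⁻¹' {p : X × X | p.2 ∈ bl (l j) p.1}) := by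
      ext y
      simp only [mem_iUnion, mem_inter_iff, mem_preimage, mem_ofPred_eq]
      constructor
      · rintro ⟨j, x, hx, hy⟩
        obtain ⟨k, rfl⟩ := hes y x (hEq.symm (hblE _ _ _ hy))
        exact ⟨j, k, hx, hy⟩
      · rintro ⟨j, k, hx, hy⟩
        exact ⟨j, _, hx, hy⟩
    rw [this]
    exact MeasurableSet.iUnion fun j => MeasurableSet.iUnion fun k => (hem k (hAm j)).inter
      (((hem k).prodMk measurable_id) (hblm _))
  let Cov : Set X := {y | ∃ j, ∃ x ∈ A j, y ∈ bl (j.1 ∪ j.2) x}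
  have hCovm : MeasurableSet Cov := hexm fun j => j.1 ∪ j.2
  let C0 : Set X := {y | ∃ j, ∃ x ∈ A j, y ∈ bl j.1 x}
  have hC0m : MeasurableSet C0 := hexm fun j => j.1
  let B : Set X := {x | ∃ k, e k x ∈ Covᶜ}ᶜ
  have hBm : MeasurableSet B := by
    have : {x | ∃ k, e k x ∈ Covᶜ} = ⋃ k, e k ⁻¹' Covᶜ := by ext x; simp
    simp only [B]
    rw [this]
    exact (MeasurableSet.iUnion fun k => hem k hCovm.compl).compl
  have hBi : EInvariant E B := by
    intro x y hxy hx hy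
    obtain ⟨k, hk⟩ := hy
    obtain ⟨k', hk'⟩ := hes x (e k y) (hEq.trans hxy (heE k y))
    exact hx ⟨k', by rwa [hk']⟩
  have hBC : ∀ x ∈ B, x ∈ Cov := by
    intro x hx
    by_contra h
    obtain ⟨k, hk⟩ := hes x x (hEq.refl x)
    exact hx ⟨k, by rw [hk]; exact h⟩
  let Q : X → X → Prop := fun a b => ∃ j, ∃ x ∈ A j, a ∈ bl (j.1 ∪ j.2) x ∧ b ∈ bl (j.1 ∪ j.2) x
  have hQm : MeasurableSet {p : X × X | Q p.1 p.2} := by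
    have : {p : X × X | Q p.1 p.2} =
        ⋃ j, ⋃ k, ((fun p : X × X => e k p.1) ⁻¹' A j ∩
          ((fun p : X × X => (e k p.1, p.1)) ⁻¹' {p : X × X | p.2 ∈ bl (j.1 ∪ j.2) p.1} ∩
          (fun p : X × X => (e k p.1, p.2)) ⁻¹' {p : X × X | p.2 ∈ bl (j.1 ∪ j.2) p.1})) := by
      ext ⟨a, b⟩
      simp only [mem_iUnion, mem_inter_iff, mem_preimage, mem_ofPred_eq, Q]
      constructor
      · rintro ⟨j, x, hx, ha, hb⟩
        obtain ⟨k, rfl⟩ := hes a x (hEq.symm (hblE _ _ _ ha))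
        exact ⟨j, k, hx, ha, hb⟩
      · rintro ⟨j, k, hx, ha, hb⟩
        exact ⟨j, _, hx, ha, hb⟩
    rw [this]
    have hk : ∀ k, Measurable fun p : X × X => e k p.1 := fun k => (hem k).comp measurable_fst
    exact MeasurableSet.iUnion fun j => MeasurableSet.iUnion fun k => (hk k (hAm j)).inter
      ((((hk k).prodMk measurable_fst) (hblm _)).inter (((hk k).prodMk measurable_snd) (hblm _)))
  have hAd' : ∀ j x j' x' y, x ∈ A j → x' ∈ A j' → y ∈ bl (j.1 ∪ j.2) x →
      y ∈ bl (j'.1 ∪ j'.2) x' → j = j' ∧ x = x' := fun j x j' x' y h1 h2 h3 h4 =>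
    hAd j x j' x' y h1 h2 (Finset.mem_coe.2 h3) (Finset.mem_coe.2 h4)
  let F : X → X → Prop := fun a b => a = b ∨ ((a ∈ B ∧ b ∈ B) ∧ Q a b)
  have hclass : ∀ x ∈ B, ∀ j, ∀ x0 ∈ A j, x ∈ bl (j.1 ∪ j.2) x0 →
      {z | F z x} = (bl (j.1 ∪ j.2) x0 : Set X) := by
    intro x hx j x0 hx0 hxb
    ext z
    constructor
    · rintro (rfl | ⟨_, j', x', hx', hz, hxz⟩)
      · exact Finset.mem_coe.2 hxb
      · obtain ⟨rfl, rfl⟩ := hAd' j x0 j' x' x hx0 hx' hxb hxz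
        exact Finset.mem_coe.2 hz
    · intro hz
      have hz := Finset.mem_coe.1 hz
      refine Or.inr ⟨⟨hBi ?_ hx, hx⟩, j, x0, hx0, hz, hxb⟩
      exact hEq.trans (hEq.symm (hblE _ _ _ hxb)) (hblE _ _ _ hz)
  have hFs : ∀ a b, F a b → F b a := by
    rintro a b (rfl | ⟨⟨ha, hb⟩, j, x, hx, h1, h2⟩)
    · exact Or.inl rfl
    · exact Or.inr ⟨⟨hb, ha⟩, j, x, hx, h2, h1⟩
  refine ⟨B, C0 ∩ B, hBm, hBi, hC0m.inter hBm, inter_subset_right, F, ⟨⟨?_, ?_, ?_⟩, ?_, ?_, ?_⟩,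
    ?_, ?_⟩
  · exact fun x => Or.inl rfl
  · exact fun {a b} h => hFs a b h
  · rintro a b c (rfl | ⟨⟨ha, hb⟩, j, x, hx, h1, h2⟩) h'
    · exact h'
    · rcases h' with rfl | ⟨⟨hb', hc⟩, j', x', hx', h1', h2'⟩
      · exact Or.inr ⟨⟨ha, hb⟩, j, x, hx, h1, h2⟩
      · obtain ⟨rfl, rfl⟩ := hAd' j x j' x' b hx hx' h2 h1'
        exact Or.inr ⟨⟨ha, hc⟩, j, x, hx, h1, h2'⟩
  · exact (measurableSet_eq_fun measurable_fst measurable_snd).union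
      (((measurable_fst hBm).inter (measurable_snd hBm)).inter hQm)
  · rintro a b (rfl | ⟨⟨ha, hb⟩, j, x, hx, h1, h2⟩)
    · exact Or.inl rfl
    · exact Or.inr ⟨hEq.trans (hEq.symm (hblE _ _ _ h1)) (hblE _ _ _ h2), ha, hb⟩
  · intro x
    by_cases hx : x ∈ B
    · obtain ⟨j, x0, hx0, hxb⟩ := hBC x hx
      refine (bl (j.1 ∪ j.2) x0).finite_toSet.subset ?_
      rw [← hclass x hx j x0 hx0 hxb]
      exact fun z hz => hFs _ _ hz
    · refine (finite_singleton x).subset ?_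
      rintro y (rfl | ⟨⟨ha, _⟩, _⟩)
      · rfl
      · exact absurd ha hx
  · simp only [B, compl_compl]
    refine smooth_part hEq hEm hem heE hes hρ hf hg hf0 hg0 hr hCovm.compl ?_
    rintro x C D hCD hne hC hD ⟨h1, h2⟩
    have hcode : ∀ z : X, ∃ p : ℕ × ℕ, E x z → e p.1 x = z ∧ e p.2 z = x := by
      intro z
      by_cases hz : E x z
      · obtain ⟨n, hn⟩ := hes x z hz
        obtain ⟨m, hm⟩ := hes z x (hEq.symm hz)
        exact ⟨(n, m), fun _ => ⟨hn, hm⟩⟩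
      · exact ⟨(0, 0), fun h => absurd h hz⟩
    choose κ hκ using hcode
    have hκC : ∀ z ∈ C, e (κ z).1 x = z := fun z hz => (hκ z (hC z hz).2).1
    have hκD : ∀ z ∈ D, e (κ z).1 x = z := fun z hz => (hκ z (hD z hz).2).1
    have hmemU : ∀ p, p ∈ C.image κ ∪ D.image κ →
        ∃ z, z ∈ Covᶜ ∧ E x z ∧ (z ∈ C ∨ z ∈ D) ∧ κ z = p := by
      intro p hp
      rcases Finset.mem_union.1 hp with h | h
      · obtain ⟨z, hz, rfl⟩ := Finset.mem_image.1 h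
        exact ⟨z, (hC z hz).1, (hC z hz).2, Or.inl hz, rfl⟩
      · obtain ⟨z, hz, rfl⟩ := Finset.mem_image.1 h
        exact ⟨z, (hD z hz).1, (hD z hz).2, Or.inr hz, rfl⟩
    have hsum : ∀ (h : X → ℝ) (T : Finset X), (∀ z ∈ T, e (κ z).1 x = z) →
        ∑ p ∈ T.image κ, h (e p.1 x) * ρ (e p.1 x) x = ∑ z ∈ T, h z * ρ z x := by
      intro h T hT
      rw [Finset.sum_image]
      · exact Finset.sum_congr rfl fun z hz => by rw [hT z hz]
      · intro z hz z' hz' hh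
        rw [← hT z hz, ← hT z' hz', hh]
    have hxG : x ∈ G (C.image κ, D.image κ) := by
      refine ⟨?_, ?_, ⟨?_, ?_⟩, ?_⟩
      · intro p hp
        obtain ⟨z, _, hz, _, rfl⟩ := hmemU p hp
        rw [(hκ z hz).1, (hκ z hz).2]
      · intro p hp q hq hpq heq
        obtain ⟨z, _, hz, _, rfl⟩ := hmemU p hp
        obtain ⟨z', _, hz', _, rfl⟩ := hmemU q hq
        rw [(hκ z hz).1, (hκ z' hz').1] at heq
        exact hpq (by rw [heq])
      · rw [Finset.disjoint_left]
        intro p hp hq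
        obtain ⟨z, hz, rfl⟩ := Finset.mem_image.1 hp
        obtain ⟨z', hz', h⟩ := Finset.mem_image.1 hq
        have : z' = z := by rw [← hκC z hz, ← hκD z' hz', h]
        subst this
        exact Finset.disjoint_left.1 hCD hz hz'
      · rcases hne with ⟨z, hz⟩ | ⟨z, hz⟩
        · exact ⟨κ z, Finset.mem_union_left _ (Finset.mem_image_of_mem κ hz)⟩
        · exact ⟨κ z, Finset.mem_union_right _ (Finset.mem_image_of_mem κ hz)⟩
      · simp only [sf, sg]
        rw [hsum f C hκC, hsum g D hκD]
        exact ⟨h1, h2⟩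
    obtain ⟨j', x', y, hx', hy, hy'⟩ := hAmax _ x hxG
    obtain ⟨p, hp, rfl⟩ := Finset.mem_image.1 (Finset.mem_coe.1 hy)
    obtain ⟨z, hzY, hz, _, rfl⟩ := hmemU p hp
    simp only [(hκ z hz).1] at hy'
    exact hzY ⟨j', x', hx', Finset.mem_coe.1 hy'⟩
  · intro x hx
    obtain ⟨j, x0, hx0, hxb⟩ := hBC x hx
    have hcl := hclass x hx j x0 hx0 hxb
    obtain ⟨hb, hinj, ⟨hdis, -⟩, hle1, hle2⟩ := hAG j hx0
    have hE0 : E x0 x := hblE _ _ _ hxb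
    have hsub1 : ∀ z ∈ bl j.1 x0, z ∈ bl (j.1 ∪ j.2) x0 := fun z hz =>
      Finset.image_subset_image Finset.subset_union_left hz
    have hsub2 : ∀ z ∈ bl j.2 x0, z ∈ bl (j.1 ∪ j.2) x0 := fun z hz =>
      Finset.image_subset_image Finset.subset_union_right hz
    have hzB : ∀ z ∈ bl (j.1 ∪ j.2) x0, z ∈ B := fun z hz =>
      hBi (hEq.trans (hEq.symm hE0) (hblE _ _ _ hz)) hx
    have hC0 : ∀ z ∈ bl (j.1 ∪ j.2) x0, (z ∈ C0 ↔ z ∈ bl j.1 x0) := by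
      intro z hz
      constructor
      · rintro ⟨j', x', hx', hz'⟩
        obtain ⟨rfl, rfl⟩ := hAd' j x0 j' x' z hx0 hx' hz
          (Finset.image_subset_image Finset.subset_union_left hz')
        exact hz'
      · exact fun h => ⟨j, x0, hx0, h⟩
    have hS1 : {z | F z x} ∩ (C0 ∩ B) = (bl j.1 x0 : Set X) := by
      rw [hcl]
      ext z
      constructor
      · rintro ⟨hz, hz', _⟩
        exact Finset.mem_coe.2 ((hC0 z (Finset.mem_coe.1 hz)).1 hz')
      · intro hz
        have hz := Finset.mem_coe.1 hz
        have hz' := hsub1 z hz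
        exact ⟨Finset.mem_coe.2 hz', (hC0 z hz').2 hz, hzB z hz'⟩
    have hS2 : {z | F z x} ∩ (B \ (C0 ∩ B)) = (bl j.2 x0 : Set X) := by
      rw [hcl]
      ext z
      constructor
      · rintro ⟨hz, hz', hz''⟩
        have hz := Finset.mem_coe.1 hz
        have hn : z ∉ bl j.1 x0 := fun h => hz'' ⟨(hC0 z hz).2 h, hz'⟩
        obtain ⟨p, hp, rfl⟩ := Finset.mem_image.1 hz
        rcases Finset.mem_union.1 hp with h | h
        · exact absurd (Finset.mem_image_of_mem _ h) hn
        · exact Finset.mem_coe.2 (Finset.mem_image_of_mem _ h)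
      · intro hz
        have hz := Finset.mem_coe.1 hz
        have hz' := hsub2 z hz
        refine ⟨Finset.mem_coe.2 hz', hzB z hz', fun h => ?_⟩
        have h1 := (hC0 z hz').1 h.1
        obtain ⟨p, hp, rfl⟩ := Finset.mem_image.1 hz
        obtain ⟨q, hq, hpq⟩ := Finset.mem_image.1 h1
        refine hinj q (Finset.mem_union_left _ hq) p (Finset.mem_union_right _ hp) ?_ hpq
        rintro rfl
        exact Finset.disjoint_left.1 hdis hq hp
    have hsum : ∀ (h : X → ℝ) (l : Finset (ℕ × ℕ)), l ⊆ j.1 ∪ j.2 → ∀ T : Set X,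
        T = (bl l x0 : Set X) → ∑' y : ↥T, h y * ρ y x =
          (∑ p ∈ l, h (e p.1 x0) * ρ (e p.1 x0) x0) * ρ x0 x := by
      intro h l hl T hT
      subst hT
      rw [Finset.tsum_subtype' (bl l x0) (fun y => h y * ρ y x), Finset.sum_image, Finset.sum_mul]
      · refine Finset.sum_congr rfl fun p _ => ?_
        rw [hρc (hEq.symm (heE p.1 x0)) hE0, mul_assoc]
      · intro p hp q hq hpq
        by_contra hne
        exact hinj p (hl hp) q (hl hq) hne hpq
    have hr0 : 0 ≤ rSize ρ {z | F z x} x := by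
      refine tsum_nonneg fun z => ?_
      have hz : (z : X) ∈ (bl (j.1 ∪ j.2) x0 : Set X) := by rw [← hcl]; exact z.2
      exact (hρ0 (hEq.trans (hEq.symm (hblE _ _ _ (Finset.mem_coe.1 hz))) hE0)).le
    have hp := (hρ0 hE0).le
    unfold avgOn
    rw [hsum f j.1 Finset.subset_union_left _ hS1, hsum g j.2 Finset.subset_union_right _ hS2]
    constructor
    · exact div_le_div_of_nonneg_right (mul_le_mul_of_nonneg_right hle1 hp) hr0
    · rw [← mul_div_assoc, ← mul_assoc]
      exact div_le_div_of_nonneg_right (mul_le_mul_of_nonneg_right hle2 hp) hr0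

end CocycleNadkarni
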